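/- arXiv:1608.08421 — 3 statements merged into one kernel-verified Lean document; each statement's English description precedes it below -/
import Mathlib

section
/- The relation ≤₂ respects the relation ≤₁: for all ordinals α, β, γ, if α ≤₁ β ≤₁ γ and α ≤₂ γ, then α ≤₂ β. -/
open FirstOrder

/-- The relation symbols of the language of `ℛ₂`: three binary relations. -/
inductive ordRel : ℕ → Type
  | le : ordRel 2
  | le1 : ordRel 2
  | le2 : ordRel 2

/-- The first-order language with three binary relation symbols `≤`, `≤₁`, `≤₂`. -/
def ordLang : FirstOrder.Language := ⟨fun _ => Empty, ordRel⟩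

/-- The `ordLang`-structure on the set of ordinals below `β`, interpreting the three
relation symbols by `≤` and the given relations `le1`, `le2`. -/
def segStr (le1 le2 : Ordinal → Ordinal → Prop) (β : Ordinal) :
    ordLang.Structure {x : Ordinal // x < β} where
  funMap := fun f => Empty.elim f
  RelMap
    | .le => fun v => (v 0).1 ≤ (v 1).1
    | .le1 => fun v => le1 (v 0).1 (v 1).1
    | .le2 => fun v => le2 (v 0).1 (v 1).1

/-- Σ₁-formulas: a block of existential quantifiers applied to a quantifier-free formula. -/
inductive IsSigma1 {L : FirstOrder.Language} {α : Type} :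
    {n : ℕ} → L.BoundedFormula α n → Prop
  | of_isQF {n} {φ : L.BoundedFormula α n} (h : φ.IsQF) : IsSigma1 φ
  | ex {n} {φ : L.BoundedFormula α (n + 1)} (h : IsSigma1 φ) : IsSigma1 φ.ex

/-- Π₁-formulas: a block of universal quantifiers applied to a quantifier-free formula. -/
inductive IsPi1 {L : FirstOrder.Language} {α : Type} :
    {n : ℕ} → L.BoundedFormula α n → Prop
  | of_isQF {n} {φ : L.BoundedFormula α n} (h : φ.IsQF) : IsPi1 φ
  | all {n} {φ : L.BoundedFormula α (n + 1)} (h : IsPi1 φ) : IsPi1 φ.all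

/-- Σ₂-formulas: a block of existential quantifiers applied to a Π₁-formula. -/
inductive IsSigma2 {L : FirstOrder.Language} {α : Type} :
    {n : ℕ} → L.BoundedFormula α n → Prop
  | of_isPi1 {n} {φ : L.BoundedFormula α n} (h : IsPi1 φ) : IsSigma2 φ
  | ex {n} {φ : L.BoundedFormula α (n + 1)} (h : IsSigma2 φ) : IsSigma2 φ.ex

/-- Realization of a formula with `k` parameters in the segment structure below `β`. -/
def RealizeIn (le1 le2 : Ordinal → Ordinal → Prop) (β : Ordinal) {k : ℕ}
    (φ : ordLang.Formula (Fin k)) (v : Fin k → {x : Ordinal // x < β}) : Prop :=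
  letI := segStr le1 le2 β
  φ.Realize v

/-- `a ≤ b` and the segment below `a` is an elementary substructure of the segment below `b`
with respect to the class `C` of formulas (with parameters from below `a`). -/
def ElemSub (C : ∀ k : ℕ, ordLang.Formula (Fin k) → Prop)
    (le1 le2 : Ordinal → Ordinal → Prop) (a b : Ordinal) : Prop :=
  ∃ hab : a ≤ b,
    ∀ (k : ℕ) (φ : ordLang.Formula (Fin k)), C k φ →
      ∀ v : Fin k → {x : Ordinal // x < a},
        RealizeIn le1 le2 a φ v ↔
          RealizeIn le1 le2 b φ (fun j => ⟨(v j).1, lt_of_lt_of_le (v j).2 hab⟩)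

/-- The pair of relations `le1`, `le2` satisfies the simultaneous recursive definition of
`≤₁` and `≤₂` on the ordinals: `α ≤ᵢ β` iff `α ≤ β` and the segment below `α` is a
Σᵢ-elementary substructure of the segment below `β`. -/
def IsR2Pair (le1 le2 : Ordinal → Ordinal → Prop) : Prop :=
  (∀ a b, le1 a b ↔ ElemSub (fun _ φ => IsSigma1 φ) le1 le2 a b) ∧
  (∀ a b, le2 a b ↔ ElemSub (fun _ φ => IsSigma2 φ) le1 le2 a b)

/-- The strict part of `≤₁`. -/
def Lt1 (le1 : Ordinal → Ordinal → Prop) (a b : Ordinal) : Prop := le1 a b ∧ a ≠ b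

/-- The strict part of `≤₂`. -/
def Lt2 (le2 : Ordinal → Ordinal → Prop) (a b : Ordinal) : Prop := le2 a b ∧ a ≠ b

/-- `1^∞`: the least ordinal `ν` such that below `ν` there are `<₂`-chains of every finite
length. -/
noncomputable def OneInfty (le2 : Ordinal → Ordinal → Prop) : Ordinal :=
  sInf {ν : Ordinal | ∀ n : ℕ, ∃ β : Fin n → Ordinal,
    (∀ i, β i < ν) ∧
    ∀ (i : ℕ) (hi : i + 1 < n), Lt2 le2 (β ⟨i, Nat.lt_of_succ_lt hi⟩) (β ⟨i + 1, hi⟩)}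

/-- A respecting forest of order 2: a finite structure with a linear order `≤₀` and partial
orders `≤₁`, `≤₂` which are forests, with `≤₂ ⊆ ≤₁ ⊆ ≤₀`, and `≤ᵢ₊₁` respecting `≤ᵢ`. -/
structure RForest where
  P : Type
  [fintypeP : Fintype P]
  le0 : P → P → Prop
  le1 : P → P → Prop
  le2 : P → P → Prop
  le0_refl : ∀ p, le0 p p
  le0_trans : ∀ p q r, le0 p q → le0 q r → le0 p r
  le0_antisymm : ∀ p q, le0 p q → le0 q p → p = q
  le0_total : ∀ p q, le0 p q ∨ le0 q p
  le1_refl : ∀ p, le1 p p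
  le1_trans : ∀ p q r, le1 p q → le1 q r → le1 p r
  le1_antisymm : ∀ p q, le1 p q → le1 q p → p = q
  le2_refl : ∀ p, le2 p p
  le2_trans : ∀ p q r, le2 p q → le2 q r → le2 p r
  le2_antisymm : ∀ p q, le2 p q → le2 q p → p = q
  le2_sub_le1 : ∀ p q, le2 p q → le1 p q
  le1_sub_le0 : ∀ p q, le1 p q → le0 p q
  forest1 : ∀ p q r, le1 q p → le1 r p → le1 q r ∨ le1 r q
  forest2 : ∀ p q r, le2 q p → le2 r p → le2 q r ∨ le2 r q
  respects1 : ∀ p q r, le0 p q → le0 q r → le1 p r → le1 p q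
  respects2 : ∀ p q r, le1 p q → le1 q r → le2 p r → le2 p q

attribute [instance] RForest.fintypeP

/-- The finite set `X` of ordinals, with the relations induced from `ℛ₂`, is isomorphic to the
respecting forest `F`. -/
def Realizes (le1 le2 : Ordinal → Ordinal → Prop) (F : RForest) (X : Finset Ordinal) : Prop :=
  ∃ e : F.P ≃ {x // x ∈ X}, ∀ p q : F.P,
    (F.le0 p q ↔ ((e p : Ordinal) ≤ (e q : Ordinal))) ∧
    (F.le1 p q ↔ le1 (e p : Ordinal) (e q : Ordinal)) ∧
    (F.le2 p q ↔ le2 (e p : Ordinal) (e q : Ordinal))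

/-- Pointwise comparison of two finite sets of ordinals via their increasing enumerations. -/
def pwLE (X Y : Finset Ordinal) : Prop :=
  ∃ h : X.card = Y.card, ∀ i : Fin X.card,
    ((X.orderIsoOfFin rfl i : {x // x ∈ X}) : Ordinal) ≤
      ((Y.orderIsoOfFin h.symm i : {x // x ∈ Y}) : Ordinal)

/-- `X` is the isominimal realization of the respecting forest `F` in `ℛ₂`: it is isomorphic
to `F` and pointwise minimal among all finite substructures of `ℛ₂` isomorphic to `F`. -/
def IsIsominimalRealization (le1 le2 : Ordinal → Ordinal → Prop) (F : RForest)
    (X : Finset Ordinal) : Prop :=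
  Realizes le1 le2 F X ∧ ∀ Y : Finset Ordinal, Realizes le1 le2 F Y → pwLE X Y

/-- A covering of the respecting forest `F` into `ℛ₂`. -/
def IsCovering (le1 le2 : Ordinal → Ordinal → Prop) (F : RForest)
    (c : F.P → Ordinal) : Prop :=
  (∀ p q, F.le0 p q ↔ c p ≤ c q) ∧
  (∀ p q, F.le1 p q → le1 (c p) (c q)) ∧
  (∀ p q, F.le2 p q → le2 (c p) (c q))


/-- A covering of the respecting forest `F` into the respecting forest `G`. -/
def ForestCovering (F G : RForest) (f : F.P → G.P) : Prop :=
  (∀ p q, F.le0 p q ↔ G.le0 (f p) (f q)) ∧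
  (∀ p q, F.le1 p q → G.le1 (f p) (f q)) ∧
  (∀ p q, F.le2 p q → G.le2 (f p) (f q))

universe u

open FirstOrder.Language in
theorem qf_relabel {L : FirstOrder.Language} {α : Type} {n : ℕ} {φ : L.BoundedFormula α n}
    (h : φ.IsQF) {m j : ℕ} (σ : α ⊕ Fin n → Fin m ⊕ Fin j) :
    ∃ ψ : L.BoundedFormula (Fin m) j, ψ.IsQF ∧
      ∀ (M : Type u) [L.Structure M] (v : Fin m → M) (xs : Fin j → M),
        ψ.Realize v xs ↔
          φ.Realize (fun i => Sum.elim v xs (σ (Sum.inl i)))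
            (fun i => Sum.elim v xs (σ (Sum.inr i))) := by
  have key : ∀ (M : Type u) [L.Structure M] (v : Fin m → M) (xs : Fin j → M),
      Sum.elim (fun i => Sum.elim v xs (σ (Sum.inl i)))
        (fun i => Sum.elim v xs (σ (Sum.inr i))) = Sum.elim v xs ∘ σ := by
    intro M _ v xs
    funext x
    cases x <;> rfl
  induction h with
  | falsum => exact ⟨⊥, .falsum, fun M _ v xs => Iff.rfl⟩
  | of_isAtomic h =>
    cases h with
    | equal t₁ t₂ =>
      refine ⟨(t₁.relabel σ).bdEqual (t₂.relabel σ), (BoundedFormula.IsAtomic.equal _ _).isQF, ?_⟩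
      intro M _ v xs
      rw [BoundedFormula.realize_bdEqual, BoundedFormula.realize_bdEqual, Term.realize_relabel,
        Term.realize_relabel, key]
    | rel R ts =>
      refine ⟨R.boundedFormula (fun i => (ts i).relabel σ),
        (BoundedFormula.IsAtomic.rel _ _).isQF, ?_⟩
      intro M _ v xs
      rw [BoundedFormula.realize_rel, BoundedFormula.realize_rel]
      simp only [Term.realize_relabel, key]
  | imp h₁ h₂ ih₁ ih₂ =>
    obtain ⟨ψ₁, q₁, e₁⟩ := ih₁
    obtain ⟨ψ₂, q₂, e₂⟩ := ih₂
    refine ⟨ψ₁.imp ψ₂, q₁.imp q₂, ?_⟩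
    intro M _ v xs
    rw [BoundedFormula.realize_imp, BoundedFormula.realize_imp, e₁, e₂]

open FirstOrder.Language in
theorem pi_neg {L : FirstOrder.Language} {α : Type} {n : ℕ} {φ : L.BoundedFormula α n}
    (h : IsPi1 φ) : ∀ {m j : ℕ} (σ : α ⊕ Fin n → Fin m ⊕ Fin j),
    ∃ ψ : L.BoundedFormula (Fin m) j, IsSigma1 ψ ∧
      ∀ (M : Type u) [L.Structure M] (v : Fin m → M) (xs : Fin j → M),
        ψ.Realize v xs ↔
          ¬ φ.Realize (fun i => Sum.elim v xs (σ (Sum.inl i)))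
            (fun i => Sum.elim v xs (σ (Sum.inr i))) := by
  induction h with
  | of_isQF h =>
    intro m j σ
    obtain ⟨ψ, q, e⟩ := qf_relabel.{u} h σ
    exact ⟨ψ.not, .of_isQF q.not, fun M _ v xs => by rw [BoundedFormula.realize_not, e]⟩
  | @all n φ h ih =>
    intro m j σ
    obtain ⟨ψ, q, e⟩ := ih (m := m) (j := j + 1)
      (Sum.elim (fun i => Sum.map id Fin.castSucc (σ (Sum.inl i)))
        (Fin.snoc (α := fun _ => Fin m ⊕ Fin (j + 1))
          (fun i => Sum.map id Fin.castSucc (σ (Sum.inr i))) (Sum.inr (Fin.last j))))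
    refine ⟨ψ.ex, .ex q, ?_⟩
    intro M _ v xs
    rw [BoundedFormula.realize_ex, BoundedFormula.realize_all, not_forall]
    refine exists_congr fun a => ?_
    rw [e]
    have k1 : ∀ y : Fin m ⊕ Fin j,
        Sum.elim v (Fin.snoc xs a : Fin (j + 1) → M) (Sum.map id Fin.castSucc y)
          = Sum.elim v xs y := by
      intro y
      cases y <;> simp
    have k2 : (fun i => Sum.elim v (Fin.snoc xs a : Fin (j + 1) → M)
        ((Fin.snoc (α := fun _ => Fin m ⊕ Fin (j + 1))
          (fun i => Sum.map id Fin.castSucc (σ (Sum.inr i))) (Sum.inr (Fin.last j)) :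
            Fin (n + 1) → Fin m ⊕ Fin (j + 1)) i))
        = (Fin.snoc (fun i => Sum.elim v xs (σ (Sum.inr i))) a : Fin (n + 1) → M) := by
      funext i
      refine Fin.lastCases ?_ (fun i => ?_) i
      · simp
      · simp only [Fin.snoc_castSucc, k1]
    simp only [Sum.elim_inl, Sum.elim_inr, k1, k2]

def segIncl {a b : Ordinal.{u}} (hab : a ≤ b) (x : {x : Ordinal.{u} // x < a}) :
    {x : Ordinal.{u} // x < b} := ⟨x.1, lt_of_lt_of_le x.2 hab⟩

open FirstOrder.Language in
theorem pi_transfer {le1 le2 : Ordinal.{u} → Ordinal.{u} → Prop} {a b : Ordinal.{u}} (hab : a ≤ b)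
    (h : ElemSub (fun _ φ => IsSigma1 φ) le1 le2 a b) {k n : ℕ}
    {φ : ordLang.BoundedFormula (Fin k) n} (hφ : IsPi1 φ)
    (v : Fin k → {x : Ordinal.{u} // x < a}) (xs : Fin n → {x : Ordinal.{u} // x < a}) :
    @BoundedFormula.Realize _ _ (segStr le1 le2 a) _ _ φ v xs ↔
    @BoundedFormula.Realize _ _ (segStr le1 le2 b) _ _ φ (segIncl hab ∘ v) (segIncl hab ∘ xs) := by
  obtain ⟨_, h⟩ := h
  obtain ⟨ψ, q, e⟩ := pi_neg.{u + 1} hφ (m := k + n) (j := 0) (fun x => Sum.inl (finSumFinEquiv x))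
  have hh := h (k + n) ψ q (fun i => Sum.elim v xs (finSumFinEquiv.symm i))
  have ea := @e _ (segStr le1 le2 a) (fun i => Sum.elim v xs (finSumFinEquiv.symm i)) default
  have eb := @e _ (segStr le1 le2 b)
    (fun i => segIncl hab (Sum.elim v xs (finSumFinEquiv.symm i))) default
  simp only [Sum.elim_inl, Sum.elim_inr, Equiv.symm_apply_apply] at ea eb
  exact not_iff_not.1 (ea.symm.trans (hh.trans eb))

open FirstOrder.Language in
theorem sigma2_up {le1 le2 : Ordinal.{u} → Ordinal.{u} → Prop} {a b : Ordinal.{u}} (hab : a ≤ b)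
    (h : ElemSub (fun _ φ => IsSigma1 φ) le1 le2 a b) {k n : ℕ}
    {φ : ordLang.BoundedFormula (Fin k) n} (hφ : IsSigma2 φ)
    (v : Fin k → {x : Ordinal.{u} // x < a}) : ∀ (xs : Fin n → {x : Ordinal.{u} // x < a}),
    @BoundedFormula.Realize _ _ (segStr le1 le2 a) _ _ φ v xs →
    @BoundedFormula.Realize _ _ (segStr le1 le2 b) _ _ φ (segIncl hab ∘ v) (segIncl hab ∘ xs) := by
  induction hφ with
  | of_isPi1 hp => exact fun xs => (pi_transfer hab h hp v xs).1
  | ex hp ih =>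
    intro xs hx
    obtain ⟨x, hx⟩ := (@BoundedFormula.realize_ex _ _ (segStr le1 le2 a) _ _ _ _ _).1 hx
    refine (@BoundedFormula.realize_ex _ _ (segStr le1 le2 b) _ _ _ _ _).2 ⟨segIncl hab x, ?_⟩
    have := ih _ hx
    rwa [Fin.comp_snoc] at this

open FirstOrder.Language in
theorem sigma2_up' {le1 le2 : Ordinal.{u} → Ordinal.{u} → Prop} {a b : Ordinal.{u}} (hab : a ≤ b)
    (h : ElemSub (fun _ φ => IsSigma1 φ) le1 le2 a b) {k : ℕ}
    {φ : ordLang.Formula (Fin k)} (hφ : IsSigma2 φ)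
    (v : Fin k → {x : Ordinal.{u} // x < a}) (hr : RealizeIn le1 le2 a φ v) :
    RealizeIn le1 le2 b φ (fun j => ⟨(v j).1, lt_of_lt_of_le (v j).2 hab⟩) := by
  have := sigma2_up hab h hφ v default hr
  rwa [Subsingleton.elim (segIncl hab ∘ (default : Fin 0 → _)) default] at this

theorem stmt6 (le1 le2 : Ordinal → Ordinal → Prop) (h : IsR2Pair le1 le2) :
    ∀ α β γ : Ordinal, le1 α β → le1 β γ → le2 α γ → le2 α β := by
  intro α β γ hαβ hβγ hαγ
  have h1 := (h.1 _ _).1 hαβ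
  have h2 := (h.1 _ _).1 hβγ
  obtain ⟨_, h3⟩ := (h.2 _ _).1 hαγ
  refine (h.2 _ _).2 ⟨h1.1, fun k φ hφ v => ⟨sigma2_up' h1.1 h1 hφ v, fun hr => ?_⟩⟩
  exact (h3 k φ hφ v).2 (sigma2_up' h2.1 h2 hφ _ hr)
end

section
/- Each of ≤₁ and ≤₂ is a partial order on the class of ordinals, ≤₂ ⊆ ≤₁ ⊆ ≤, and both are forests: for every ordinal β, the set {γ : γ ≤₁ β} is linearly ordered by ≤₁ and the set {γ : γ ≤₂ β} is linearly ordered by ≤₂. -/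
open FirstOrder

theorem ElemSub.rfl' (C : ∀ k : ℕ, ordLang.Formula (Fin k) → Prop)
    (le1 le2 : Ordinal → Ordinal → Prop) (a : Ordinal) : ElemSub C le1 le2 a a :=
  ⟨le_refl a, fun _ _ _ _ => Iff.rfl⟩

theorem ElemSub.trans' {C : ∀ k : ℕ, ordLang.Formula (Fin k) → Prop}
    {le1 le2 : Ordinal → Ordinal → Prop} {a b c : Ordinal}
    (hab : ElemSub C le1 le2 a b) (hbc : ElemSub C le1 le2 b c) : ElemSub C le1 le2 a c := by
  obtain ⟨h1, h2⟩ := hab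
  obtain ⟨h3, h4⟩ := hbc
  exact ⟨h1.trans h3, fun k φ hφ v => (h2 k φ hφ v).trans (h4 k φ hφ _)⟩

theorem ElemSub.forest {C : ∀ k : ℕ, ordLang.Formula (Fin k) → Prop}
    {le1 le2 : Ordinal → Ordinal → Prop} {a b c : Ordinal}
    (hab : ElemSub C le1 le2 a b) (hcb : ElemSub C le1 le2 c b) :
    ElemSub C le1 le2 a c ∨ ElemSub C le1 le2 c a := by
  obtain ⟨h1, h2⟩ := hab
  obtain ⟨h3, h4⟩ := hcb
  rcases le_total a c with h | h
  · exact Or.inl ⟨h, fun k φ hφ v => (h2 k φ hφ v).trans (h4 k φ hφ (fun j => ⟨(v j).1, lt_of_lt_of_le (v j).2 h⟩)).symm⟩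
  · exact Or.inr ⟨h, fun k φ hφ v => (h4 k φ hφ v).trans (h2 k φ hφ (fun j => ⟨(v j).1, lt_of_lt_of_le (v j).2 h⟩)).symm⟩

theorem IsSigma1.isSigma2 {L : FirstOrder.Language} {α : Type} {n : ℕ}
    {φ : L.BoundedFormula α n} (h : IsSigma1 φ) : IsSigma2 φ := by
  induction h with
  | of_isQF h => exact .of_isPi1 (.of_isQF h)
  | ex _ ih => exact .ex ih

theorem stmt7 (le1 le2 : Ordinal → Ordinal → Prop) (h : IsR2Pair le1 le2) :
    (∀ a, le1 a a) ∧
    (∀ a b c, le1 a b → le1 b c → le1 a c) ∧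
    (∀ a b, le1 a b → le1 b a → a = b) ∧
    (∀ a, le2 a a) ∧
    (∀ a b c, le2 a b → le2 b c → le2 a c) ∧
    (∀ a b, le2 a b → le2 b a → a = b) ∧
    (∀ a b, le2 a b → le1 a b) ∧
    (∀ a b, le1 a b → a ≤ b) ∧
    (∀ β a c, le1 a β → le1 c β → le1 a c ∨ le1 c a) ∧
    (∀ β a c, le2 a β → le2 c β → le2 a c ∨ le2 c a) := by
  obtain ⟨H1, H2⟩ := h
  refine ⟨fun a => (H1 a a).2 (.rfl' _ _ _ _),
    fun a b c x y => (H1 a c).2 (((H1 a b).1 x).trans' ((H1 b c).1 y)),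
    fun a b x y => le_antisymm ((H1 a b).1 x).1 ((H1 b a).1 y).1,
    fun a => (H2 a a).2 (.rfl' _ _ _ _),
    fun a b c x y => (H2 a c).2 (((H2 a b).1 x).trans' ((H2 b c).1 y)),
    fun a b x y => le_antisymm ((H2 a b).1 x).1 ((H2 b a).1 y).1,
    fun a b x => ?_, fun a b x => ((H1 a b).1 x).1, fun β a c x y => ?_, fun β a c x y => ?_⟩
  · obtain ⟨h1, h2⟩ := (H2 a b).1 x
    exact (H1 a b).2 ⟨h1, fun k φ hφ v => h2 k φ hφ.isSigma2 v⟩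
  · rw [H1 a c, H1 c a]
    exact ((H1 a β).1 x).forest ((H1 c β).1 y)
  · rw [H2 a c, H2 c a]
    exact ((H2 a β).1 x).forest ((H2 c β).1 y)
end

section
/- If an ordinal α has a nontrivial ≤₂-reach, i.e. α <₂ β for some ordinal β, then α is the proper supremum of its <₁-predecessors: the set {γ : γ <₁ α} is nonempty and its supremum equals α (while α itself does not belong to it). -/
open FirstOrder

open FirstOrder FirstOrder.Language

def Sat (le1 le2 : Ordinal → Ordinal → Prop) (β : Ordinal) {k n : ℕ}
    (φ : ordLang.BoundedFormula (Fin k) n) (v : Fin k → {x : Ordinal // x < β})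
    (xs : Fin n → {x : Ordinal // x < β}) : Prop :=
  letI := segStr le1 le2 β
  φ.Realize v xs

def segInc {a b : Ordinal} (hab : a ≤ b) (x : {x : Ordinal // x < a}) : {x : Ordinal // x < b} :=
  ⟨x.1, lt_of_lt_of_le x.2 hab⟩

def segEmb (le1 le2 : Ordinal → Ordinal → Prop) {a b : Ordinal} (hab : a ≤ b) :
    letI := segStr le1 le2 a
    letI := segStr le1 le2 b
    {x : Ordinal // x < a} ↪[ordLang] {x : Ordinal // x < b} :=
  letI := segStr le1 le2 a
  letI := segStr le1 le2 b
  { toFun := segInc hab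
    inj' := fun x y h => Subtype.ext (Subtype.mk.inj h)
    map_fun' := fun f => Empty.elim f
    map_rel' := fun r x => by cases r <;> exact Iff.rfl }

theorem sat_qf (le1 le2 : Ordinal → Ordinal → Prop) {a b : Ordinal} (hab : a ≤ b) {k n : ℕ}
    {φ : ordLang.BoundedFormula (Fin k) n} (h : φ.IsQF) (v xs) :
    Sat le1 le2 b φ (segInc hab ∘ v) (segInc hab ∘ xs) ↔ Sat le1 le2 a φ v xs := by
  letI := segStr le1 le2 a
  letI := segStr le1 le2 b
  exact h.realize_embedding (segEmb le1 le2 hab)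

theorem sat_ex (le1 le2 : Ordinal → Ordinal → Prop) {a : Ordinal} {k n : ℕ}
    {φ : ordLang.BoundedFormula (Fin k) (n+1)} (v xs) :
    Sat le1 le2 a φ.ex v xs ↔ ∃ x, Sat le1 le2 a φ v (Fin.snoc xs x) := by
  letI := segStr le1 le2 a
  exact BoundedFormula.realize_ex

theorem sat_up (le1 le2 : Ordinal → Ordinal → Prop) {a b : Ordinal} (hab : a ≤ b) {k n : ℕ}
    {φ : ordLang.BoundedFormula (Fin k) n} (h : IsSigma1 φ) :
    ∀ v xs, Sat le1 le2 a φ v xs → Sat le1 le2 b φ (segInc hab ∘ v) (segInc hab ∘ xs) := by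
  induction h with
  | of_isQF h => exact fun v xs hs => (sat_qf le1 le2 hab h v xs).2 hs
  | ex h ih =>
    intro v xs hs
    obtain ⟨x, hx⟩ := (sat_ex ..).1 hs
    refine (sat_ex ..).2 ⟨segInc hab x, ?_⟩
    have := ih v _ hx
    rwa [Fin.comp_snoc] at this

theorem sat_down (le1 le2 : Ordinal → Ordinal → Prop) {b c : Ordinal} (hc : c < b)
    (hb : ∀ x < b, ∃ y < b, x < y) {k n : ℕ}
    {φ : ordLang.BoundedFormula (Fin k) n} (h : IsSigma1 φ) :
    ∀ v xs, Sat le1 le2 b φ v xs → ∃ a, ∃ hab : a < b, c ≤ a ∧ ∃ v' xs',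
      v = segInc hab.le ∘ v' ∧ xs = segInc hab.le ∘ xs' ∧ Sat le1 le2 a φ v' xs' := by
  induction h with
  | @of_isQF n φ h =>
    intro v xs hs
    have key : ∀ m (f : Fin m → {x : Ordinal // x < b}), ∃ a < b, ∀ i, (f i).1 < a := by
      intro m f
      induction m with
      | zero => exact ⟨c, hc, fun i => i.elim0⟩
      | succ m ih =>
        obtain ⟨a, ha, h⟩ := ih (fun i => f i.succ)
        obtain ⟨d, hd, h'⟩ := hb _ (f 0).2
        exact ⟨max a d, max_lt ha hd, fun i => Fin.cases (lt_max_of_lt_right h')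
          (fun i => lt_max_of_lt_left (h i)) i⟩
    obtain ⟨p, hp, h1⟩ := key _ v
    obtain ⟨q, hq, h2⟩ := key _ xs
    have hab : max c (max p q) < b := max_lt hc (max_lt hp hq)
    refine ⟨_, hab, le_max_left _ _, fun i => ⟨(v i).1, ?_⟩, fun i => ⟨(xs i).1, ?_⟩, rfl, rfl, ?_⟩
    · exact lt_max_of_lt_right (lt_max_of_lt_left (h1 i))
    · exact lt_max_of_lt_right (lt_max_of_lt_right (h2 i))
    · exact (sat_qf le1 le2 hab.le h _ _).1 hs
  | ex h ih =>
    intro v xs hs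
    obtain ⟨x, hx⟩ := (sat_ex ..).1 hs
    obtain ⟨a, hab, hca, v', xs', hv, hxs, hs'⟩ := ih v _ hx
    refine ⟨a, hab, hca, v', Fin.init xs', hv, ?_, (sat_ex ..).2 ⟨xs' (Fin.last _), ?_⟩⟩
    · funext i
      have := congrFun hxs i.castSucc
      simpa [Fin.init] using this
    · rwa [Fin.snoc_init_self]

theorem realizeIn_iff (le1 le2 : Ordinal → Ordinal → Prop) {β : Ordinal} {k : ℕ}
    (φ : ordLang.Formula (Fin k)) (v) : RealizeIn le1 le2 β φ v ↔ Sat le1 le2 β φ v default :=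
  Iff.rfl

theorem sigma1_sigma2 {k n : ℕ} {φ : ordLang.BoundedFormula (Fin k) n} (h : IsSigma1 φ) :
    IsSigma2 φ := by
  induction h with
  | of_isQF h => exact .of_isPi1 (.of_isQF h)
  | ex h ih => exact .ex ih

theorem realizeIn_up (le1 le2 : Ordinal → Ordinal → Prop) {a b : Ordinal} (hab : a ≤ b) {k : ℕ}
    {φ : ordLang.Formula (Fin k)} (h : IsSigma1 φ) (v) (hs : RealizeIn le1 le2 a φ v) :
    RealizeIn le1 le2 b φ (fun j => ⟨(v j).1, lt_of_lt_of_le (v j).2 hab⟩) := by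
  have := sat_up le1 le2 hab h v default hs
  rw [Subsingleton.elim (segInc hab ∘ default) default] at this
  exact this

def fml0 : ordLang.BoundedFormula (Fin 0) 1 :=
  Relations.boundedFormula₂ (L := ordLang) ordRel.le (Term.var (Sum.inr 0)) (Term.var (Sum.inr 0))

def fmlA : ordLang.BoundedFormula (Fin 1) 2 :=
  Relations.boundedFormula₂ (L := ordLang) ordRel.le (Term.var (Sum.inr 0)) (Term.var (Sum.inl 0))
def fmlB : ordLang.BoundedFormula (Fin 1) 2 :=
  Relations.boundedFormula₂ (L := ordLang) ordRel.le (Term.var (Sum.inr 0)) (Term.var (Sum.inr 1))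
def fmlC : ordLang.BoundedFormula (Fin 1) 2 :=
  Relations.boundedFormula₂ (L := ordLang) ordRel.le1 (Term.var (Sum.inr 0)) (Term.var (Sum.inr 1))

def fmlQ : ordLang.BoundedFormula (Fin 1) 2 := fmlA.not ⊓ (fmlB.imp fmlC)

theorem fmlQ_qf : fmlQ.IsQF := by
  refine BoundedFormula.IsQF.inf (BoundedFormula.IsQF.not ?_) (BoundedFormula.IsQF.imp ?_ ?_)
  all_goals exact (BoundedFormula.IsAtomic.rel _ _).isQF

theorem fml_iff (le1 le2 : Ordinal → Ordinal → Prop) (β : Ordinal)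
    (v : Fin 1 → {x : Ordinal // x < β}) :
    RealizeIn le1 le2 β (fmlQ.all.ex : ordLang.Formula (Fin 1)) v ↔
      ∃ x < β, ∀ y < β, (v 0).1 < x ∧ (x ≤ y → le1 x y) := by
  letI := segStr le1 le2 β
  have e1 : ∀ x y : {x : Ordinal // x < β}, 
      fmlQ.Realize v (Fin.snoc (Fin.snoc default x) y) ↔
      ((v 0).1 < x.1 ∧ (x.1 ≤ y.1 → le1 x.1 y.1)) := by
    intro x y
    rw [fmlQ, BoundedFormula.realize_inf, BoundedFormula.realize_not, BoundedFormula.realize_imp,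
      ← not_le]
    exact Iff.rfl
  change (fmlQ.all.ex).Realize v default ↔ _
  simp only [BoundedFormula.realize_ex, BoundedFormula.realize_all, e1, Subtype.exists,
    Subtype.forall, exists_prop]

theorem stmt8 (le1 le2 : Ordinal → Ordinal → Prop) (h : IsR2Pair le1 le2)
    (α : Ordinal) (hα : ∃ β, Lt2 le2 α β) :
    {γ : Ordinal | Lt1 le1 γ α}.Nonempty ∧
    sSup {γ : Ordinal | Lt1 le1 γ α} = α ∧
    α ∉ {γ : Ordinal | Lt1 le1 γ α} := by
  obtain ⟨β, h2, hne⟩ := hα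
  obtain ⟨hab, hel⟩ := (h.2 _ _).1 h2
  have hlt : α < β := lt_of_le_of_ne hab hne
  have hpos : 0 < α := by
    have := hel 0 fml0.ex (sigma1_sigma2 (.ex (.of_isQF
      (BoundedFormula.IsAtomic.rel _ _).isQF))) (fun i => i.elim0)
    have ha := this.2 (by
      rw [realizeIn_iff, sat_ex]
      exact ⟨⟨α, hlt⟩, le_refl α⟩)
    rw [realizeIn_iff, sat_ex] at ha
    obtain ⟨x, -⟩ := ha
    exact lt_of_le_of_lt zero_le x.2
  have hα1 : ∀ y < β, α ≤ y → le1 α y := by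
    intro y hy hay
    rw [h.1]
    refine ⟨hay, fun k φ hφ v => ⟨realizeIn_up le1 le2 hay hφ v, fun hs => ?_⟩⟩
    exact (hel k φ (sigma1_sigma2 hφ) v).2 (realizeIn_up le1 le2 hy.le hφ _ hs)
  have step : ∀ δ < α, ∃ x < α, δ < x ∧ ∀ y < α, x ≤ y → le1 x y := by
    intro δ hδ
    have := hel 1 fmlQ.all.ex (.ex (.of_isPi1 (.all (.of_isQF fmlQ_qf)))) (fun _ => ⟨δ, hδ⟩)
    rw [fml_iff, fml_iff] at this
    obtain ⟨x, hx, hy⟩ := this.2 ⟨α, hlt, fun y hy => ⟨hδ, hα1 y hy⟩⟩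
    exact ⟨x, hx, (hy x hx).1, fun y h => (hy y h).2⟩
  have hlim : ∀ x < α, ∃ y < α, x < y := fun x hx => by
    obtain ⟨y, hy, h, -⟩ := step x hx
    exact ⟨y, hy, h⟩
  have main : ∀ δ < α, ∃ x, δ < x ∧ Lt1 le1 x α := by
    intro δ hδ
    obtain ⟨x, hx, hδx, hy⟩ := step δ hδ
    refine ⟨x, hδx, ?_, hx.ne⟩
    rw [h.1]
    refine ⟨hx.le, fun k φ hφ v => ⟨realizeIn_up le1 le2 hx.le hφ v, fun hs => ?_⟩⟩
    obtain ⟨a, ha, hxa, v', xs', hv, -, hs'⟩ := sat_down le1 le2 hx hlim hφ _ _ hs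
    obtain ⟨_, he⟩ := (h.1 _ _).1 (hy a ha hxa)
    refine (he k φ hφ v).2 ?_
    have e : v' = (fun j => ⟨(v j).1, lt_of_lt_of_le (v j).2 hxa⟩) := by
      funext j
      exact Subtype.ext (congrArg Subtype.val (congrFun hv j)).symm
    rw [← e, realizeIn_iff]
    convert hs'
  have hne' : {γ : Ordinal | Lt1 le1 γ α}.Nonempty := by
    obtain ⟨x, -, hx⟩ := main 0 hpos
    exact ⟨x, hx⟩
  refine ⟨hne', ?_, fun hh => hh.2 rfl⟩
  have hub : ∀ x ∈ {γ : Ordinal | Lt1 le1 γ α}, x ≤ α := fun x hx => ((h.1 _ _).1 hx.1).1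
  refine csSup_eq_of_forall_le_of_forall_lt_exists_gt hne' hub ?_
  intro w hw
  obtain ⟨x, hx, h'⟩ := main w hw
  exact ⟨x, h', hx⟩
end
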